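/- arXiv:1901.01825 — 7 statements merged into one kernel-verified Lean document; each statement's English description precedes it below -/
import Mathlib

section
/- Let m and t be natural numbers with m ≥ 1, and fix a target index j ∈ Fin m. Under the uniform probability distribution on the finite set of all functions g : Fin t → Fin m (modeling t independent, uniformly random hash evaluations into a filter of m bits), the probability of the event that j does not lie in the range of g equals (1 - 1/m)^t. -/
/-!
`Finset.dens` is the probability of an event under the uniform distribution. The density of a box is
the product of the densities of its sides, that is, the coordinates of a uniformly random function
are independent and uniform; avoiding a set in every coordinate is such a box.
-/

section UniformDensity

open Finset

section Pi

variable {ι : Type*} [Fintype ι] [DecidableEq ι] {α : ι → Type*} [∀ i, Fintype (α i)]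

lemma dens_piFinset (s : ∀ i, Finset (α i)) :
    (Fintype.piFinset s).dens = ∏ i, (s i).dens := by
  simp only [dens_eq_card_div_card, Fintype.card_piFinset, Fintype.card_pi, Nat.cast_prod,
    prod_div_distrib]

lemma filter_forall_notMem_eq_piFinset_compl [∀ i, DecidableEq (α i)] (s : ∀ i, Finset (α i)) :
    ({g | ∀ i, g i ∉ s i} : Finset (∀ i, α i)) = Fintype.piFinset fun i ↦ (s i)ᶜ := by
  ext g
  simp

end Pi

variable {ι α 𝕜 : Type*} [Fintype α] [DecidableEq α] [Nonempty α] [Field 𝕜] [CharZero 𝕜]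

lemma cast_dens_compl (s : Finset α) : (sᶜ.dens : 𝕜) = 1 - s.dens := by
  have h : sᶜ.dens + s.dens = 1 := by
    rw [compl_eq_univ_sdiff, dens_sdiff_add_dens_eq_dens s.subset_univ, dens_univ]
  exact eq_sub_of_add_eq (mod_cast h)

theorem bloom_bit_not_set_prob_general [Fintype ι] [DecidableEq ι] (s : Finset α) :
    (#{g : ι → α | ∀ i, g i ∉ s} : 𝕜) / Fintype.card (ι → α) =
      (1 - #s / Fintype.card α) ^ Fintype.card ι := by
  calc (#{g : ι → α | ∀ i, g i ∉ s} : 𝕜) / Fintype.card (ι → α)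
    _ = ((Fintype.piFinset fun _ : ι ↦ sᶜ).dens : 𝕜) := by
      rw [filter_forall_notMem_eq_piFinset_compl, nnratCast_dens]
    _ = (sᶜ.dens : 𝕜) ^ Fintype.card ι := by
      rw [dens_piFinset, prod_const, card_univ, NNRat.cast_pow]
    _ = (1 - #s / Fintype.card α) ^ Fintype.card ι := by
      rw [cast_dens_compl, nnratCast_dens]

end UniformDensity

/-- Under the uniform distribution on all functions `g : Fin t → Fin m` (t independent
uniform hash evaluations into m bits), the probability that a fixed bit `j` is not in the
range of `g` equals `(1 - 1/m)^t`. -/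
theorem bloom_bit_not_set_prob (m t : ℕ) (hm : 1 ≤ m) (j : Fin m) :
    ((Finset.univ.filter (fun g : Fin t → Fin m => ¬ ∃ i, g i = j)).card : ℝ) /
      (Fintype.card (Fin t → Fin m) : ℝ) = (1 - 1 / (m : ℝ)) ^ t := by
  have : Nonempty (Fin m) := ⟨j⟩
  simpa using bloom_bit_not_set_prob_general (ι := Fin t) (𝕜 := ℝ) {j}
end

section
/- Let m, t, k be natural numbers with m ≥ 1, and fix targets j : Fin k → Fin m. Under the uniform probability distribution on the finite set of all functions g : Fin k → (Fin t → Fin m) (modeling k mutually independent families of t uniformly random hash evaluations each), the probability of the event that for every i ∈ Fin k the target j i lies in the range of g i equals (1 - (1 - 1/m)^t)^k. -/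
/-! A family of functions is a point of a product space, so the events `j i ∈ range (g i)` are
independent and the density of their conjunction is the product of their densities. Each factor is
found through its complement: `f` misses `c` iff every value of `f` avoids `c`, again a conjunction
of independent events, each of density `1 - 1 / m`. -/

open Finset

section Pi

variable {ι : Type*} [Fintype ι] [DecidableEq ι] {Ω : ι → Type*} [∀ i, Fintype (Ω i)]

lemma dens_filter_forall_pi (p : ∀ i, Ω i → Prop) [∀ i, DecidablePred (p i)]
    [DecidablePred fun ω : ∀ i, Ω i ↦ ∀ i, p i (ω i)] :
    dens {ω : ∀ i, Ω i | ∀ i, p i (ω i)} = ∏ i, dens {x : Ω i | p i x} := by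
  have h_pi : ({ω | ∀ i, p i (ω i)} : Finset (∀ i, Ω i)) =
      Fintype.piFinset fun i ↦ {x : Ω i | p i x} := by
    ext; simp
  simp only [h_pi, dens, Fintype.card_piFinset, Fintype.card_pi, Nat.cast_prod, prod_div_distrib]

end Pi

section Field

variable {K : Type*} [Field K] [CharZero K]

lemma nnratCast_dens_filter_not {Ω : Type*} [Fintype Ω] [Nonempty Ω] (p : Ω → Prop)
    [DecidablePred p] [DecidablePred fun x ↦ ¬ p x] :
    (dens {x | ¬ p x} : K) = 1 - dens {x | p x} := by
  have h_add := dens_filter_add_dens_filter_not_eq_dens (s := univ) p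
  rw [dens_univ] at h_add
  exact eq_sub_of_add_eq' (mod_cast h_add)

section Function

variable {α β : Type*} [Fintype α] [DecidableEq α] [Fintype β]

lemma nnratCast_dens_filter_forall_apply_ne (c : β)
    [DecidablePred fun f : α → β ↦ ∀ a, f a ≠ c] :
    (dens {f : α → β | ∀ a, f a ≠ c} : K) =
      (1 - 1 / (Fintype.card β : K)) ^ Fintype.card α := by
  classical
  have : Nonempty β := ⟨c⟩
  have h_ne : (dens {b | b ≠ c} : K) = 1 - 1 / (Fintype.card β : K) := by
    rw [nnratCast_dens_filter_not, filter_eq' univ c, if_pos (mem_univ c), dens_singleton]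
    simp
  rw [dens_filter_forall_pi fun (_ : α) b ↦ b ≠ c, prod_const, card_univ, NNRat.cast_pow, h_ne]

lemma nnratCast_dens_filter_exists_apply_eq (c : β)
    [DecidablePred fun f : α → β ↦ ∃ a, f a = c] :
    (dens {f : α → β | ∃ a, f a = c} : K) =
      1 - (1 - 1 / (Fintype.card β : K)) ^ Fintype.card α := by
  classical
  have : Nonempty β := ⟨c⟩
  rw [← nnratCast_dens_filter_forall_apply_ne c, ← nnratCast_dens_filter_not]
  simp

end Function

theorem bloom_matrix_fp_prob_general {ι : Type*} [Fintype ι] [DecidableEq ι] {α β : ι → Type*}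
    [∀ i, Fintype (α i)] [∀ i, DecidableEq (α i)] [∀ i, Fintype (β i)] (j : ∀ i, β i)
    [DecidablePred fun g : ∀ i, α i → β i ↦ ∀ i, ∃ a, g i a = j i] :
    (#{g : ∀ i, α i → β i | ∀ i, ∃ a, g i a = j i} : K) / Fintype.card (∀ i, α i → β i) =
      ∏ i, (1 - (1 - 1 / (Fintype.card (β i) : K)) ^ Fintype.card (α i)) := by
  classical
  rw [← nnratCast_dens, dens_filter_forall_pi fun i (f : α i → β i) ↦ ∃ a, f a = j i,
    NNRat.cast_prod]
  simp only [nnratCast_dens_filter_exists_apply_eq]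

end Field

/-- Under the uniform distribution on all functions `g : Fin k → (Fin t → Fin m)`
(k mutually independent families of t uniform hash evaluations each), the probability
that for every `i` the target `j i` lies in the range of `g i` equals
`(1 - (1 - 1/m)^t)^k`. -/
theorem bloom_matrix_fp_prob (m t k : ℕ) (hm : 1 ≤ m) (j : Fin k → Fin m) :
    ((Finset.univ.filter
        (fun g : Fin k → (Fin t → Fin m) => ∀ i : Fin k, ∃ a, g i a = j i)).card : ℝ) /
      (Fintype.card (Fin k → (Fin t → Fin m)) : ℝ) =
      (1 - (1 - 1 / (m : ℝ)) ^ t) ^ k := by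
  simpa using bloom_matrix_fp_prob_general (K := ℝ) (α := fun _ ↦ Fin t) j
end

section
/- Let A be a finite type (the potential false-positive items for one label), let m, k, n be natural numbers with m ≥ 1, and fix targets j : Fin k → Fin m. Under the uniform probability distribution on the finite set of all functions h : A → Fin k → (Fin (n·k) → Fin m) (each item's column receiving k mutually independent families of n·k uniformly random hash evaluations, independently across items), the expected cardinality of the random set {e ∈ A | for every i ∈ Fin k, the target j i lies in the range of h e i} equals (card A) · (1 - (1 - 1/m)^{n·k})^k. -/
/-!
By linearity of expectation, the answer is the sum over the items of the probability that an item
is a false positive. For a fixed item the functions attached to the other items are irrelevant, and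
the `k` families are independent, so that probability is the product of the probabilities that each
family hits its target. A family of `N` independent uniform values misses a fixed target with
probability `(1 - 1 / m) ^ N`.
-/

open scoped BigOperators

theorem expect_card_filter {R Ω α : Type*} [Semiring R] [Module ℚ≥0 R] [Fintype Ω] [Fintype α]
    (p : Ω → α → Prop) [∀ ω, DecidablePred (p ω)] :
    𝔼 ω, (Finset.card {a | p ω a} : R) = ∑ a, 𝔼 ω, if p ω a then 1 else 0 := by
  simp only [Finset.natCast_card_filter, Finset.expect_sum_comm]

section Pi

variable {ι : Type*} {X : ι → Type*} [Fintype ι] [DecidableEq ι] [∀ i, Fintype (X i)]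

theorem expect_pi_prod {R : Type*} [CommSemiring R] [Algebra ℚ≥0 R] (F : ∀ i, X i → R) :
    𝔼 x : ∀ i, X i, ∏ i, F i (x i) = ∏ i, 𝔼 y, F i y := by
  simp only [Finset.expect_univ, Finset.prod_smul, Fintype.prod_sum, Fintype.card_pi,
    Nat.cast_prod, Finset.prod_inv_distrib]

theorem expect_comp_eval {M : Type*} [AddCommMonoid M] [Module ℚ≥0 M] [∀ i, Nonempty (X i)]
    (i : ι) (f : X i → M) : 𝔼 x : ∀ i, X i, f (x i) = 𝔼 y, f y :=
  calc
    𝔼 x : ∀ i, X i, f (x i) = 𝔼 p : X i × (∀ j : {j // j ≠ i}, X j), f p.1 :=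
      Fintype.expect_equiv (Equiv.piSplitAt i X) _ _ fun _ ↦ rfl
    _ = 𝔼 y, 𝔼 _z : ∀ j : {j // j ≠ i}, X j, f y := by
      rw [← Finset.univ_product_univ, Finset.expect_product]
    _ = 𝔼 y, f y := by simp only [Fintype.expect_const]

end Pi

section Hits

variable {K α β ι κ : Type*} [Field K] [CharZero K] [Fintype α] [Fintype β]
  [DecidableEq β] [Fintype ι] [DecidableEq ι] [Fintype κ] [DecidableEq κ]

theorem expect_ite_ne (t : β) :
    (𝔼 x, if x ≠ t then 1 else 0) = 1 - 1 / (Fintype.card β : K) := by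
  have : Nonempty β := ⟨t⟩
  have compl (x : β) : (if x ≠ t then 1 else 0 : K) = 1 - if x = t then 1 else 0 := by
    split_ifs <;> simp_all
  simp only [compl, Finset.expect_sub_distrib, Fintype.expect_one]
  simp

theorem expect_ite_exists_eq (t : β) :
    (𝔼 y : κ → β, if ∃ a, y a = t then 1 else 0) =
      1 - (1 - 1 / (Fintype.card β : K)) ^ Fintype.card κ := by
  have : Nonempty β := ⟨t⟩
  have compl (y : κ → β) :
      (if ∃ a, y a = t then 1 else 0 : K) = 1 - ∏ a, if y a ≠ t then 1 else 0 := by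
    rw [Fintype.prod_boole]
    split_ifs <;> simp_all
  calc
    (𝔼 y : κ → β, if ∃ a, y a = t then 1 else 0 : K)
      = 1 - 𝔼 y : κ → β, ∏ a, if y a ≠ t then 1 else 0 := by
        simp only [compl, Finset.expect_sub_distrib, Fintype.expect_one]
    _ = 1 - ∏ _a : κ, 𝔼 x : β, if x ≠ t then 1 else 0 := by
        rw [expect_pi_prod fun _ x ↦ if x ≠ t then 1 else 0]
    _ = 1 - (1 - 1 / (Fintype.card β : K)) ^ Fintype.card κ := by
        rw [expect_ite_ne, Finset.prod_const, Finset.card_univ]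

theorem expect_ite_forall_exists_eq (t : ι → β) :
    (𝔼 v : ι → κ → β, if ∀ i, ∃ a, v i a = t i then 1 else 0) =
      (1 - (1 - 1 / (Fintype.card β : K)) ^ Fintype.card κ) ^ Fintype.card ι := by
  simp only [← Fintype.prod_boole]
  rw [expect_pi_prod fun i (y : κ → β) ↦ if ∃ a, y a = t i then 1 else 0]
  simp only [expect_ite_exists_eq, Finset.prod_const, Finset.card_univ]

theorem bloom_matrix_expected_fp_general [DecidableEq α] [Nonempty β] (t : ι → β) :
    𝔼 h : α → ι → κ → β, (Finset.card {e | ∀ i, ∃ a, h e i a = t i} : K) =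
      Fintype.card α *
        (1 - (1 - 1 / (Fintype.card β : K)) ^ Fintype.card κ) ^ Fintype.card ι := by
  have prob_item (e : α) :
      (𝔼 h : α → ι → κ → β, if ∀ i, ∃ a, h e i a = t i then 1 else 0) =
        (1 - (1 - 1 / (Fintype.card β : K)) ^ Fintype.card κ) ^ Fintype.card ι := by
    rw [← expect_ite_forall_exists_eq t]
    exact expect_comp_eval (X := fun _ : α ↦ ι → κ → β) e
      fun v ↦ if ∀ i, ∃ a, v i a = t i then 1 else 0
  rw [expect_card_filter]
  simp only [prob_item, Finset.sum_const, Finset.card_univ, nsmul_eq_mul]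

end Hits

/-- Under the uniform distribution on all functions `h : A → Fin k → (Fin (n·k) → Fin m)`,
the expected number of items `e ∈ A` such that for every `i`, `j i` lies in the range of
`h e i` equals `|A| · (1 - (1 - 1/m)^{n·k})^k`. -/
theorem bloom_matrix_expected_fp (A : Type*) [Fintype A] [DecidableEq A] (m k n : ℕ) (hm : 1 ≤ m)
    (j : Fin k → Fin m) :
    ∑ h : A → Fin k → (Fin (n * k) → Fin m),
        (1 / (Fintype.card (A → Fin k → (Fin (n * k) → Fin m)) : ℝ)) *
          ((Finset.univ.filter (fun e : A => ∀ i : Fin k, ∃ a, h e i a = j i)).card : ℝ) =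
      (Fintype.card A : ℝ) * (1 - (1 - 1 / (m : ℝ)) ^ (n * k)) ^ k := by
  have : Nonempty (Fin m) := ⟨⟨0, hm⟩⟩
  simp only [one_div_mul_eq_div, ← Finset.sum_div, ← Fintype.expect_eq_sum_div_card]
  -- Bounded quantifiers over `Fin` have their own decidability instances, hence `convert!`.
  convert! bloom_matrix_expected_fp_general (K := ℝ) (κ := Fin (n * k)) j <;>
    simp only [Fintype.card_fin]
end

section
/- Let L (labels) and E (items) be finite types with L nonempty, let f : L → Finset E, let m, k, n be natural numbers with m ≥ 1, and fix targets j : L → Fin k → Fin m. Under the uniform probability distribution on the finite set of all functions h : (L × E) → Fin k → (Fin (n·k) → Fin m), the expected value of the random quantity (1/card L) · Σ_{l ∈ L} card {e ∈ E \ f l | for every i ∈ Fin k, the target j l i lies in the range of h (l, e) i} equals (Σ_{l ∈ L} (card (E \ f l)) · (1 - (1 - 1/m)^{n·k})^k) / (card L). -/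
/-!
By linearity of expectation it suffices to find, for one label `l` and one item `e ∉ f l`, the
probability that every target `j l i` is hit. Only the coordinate `(l, e)` of `h` matters, its `k`
components are independent, and a uniform function `Fin (n * k) → Fin m` misses a given value with
probability `(1 - 1 / m) ^ (n * k)`.
-/

open Finset
open scoped BigOperators

lemma expect_pi_apply {ι M : Type*} {α : ι → Type*} [Fintype ι] [DecidableEq ι]
    [∀ i, Fintype (α i)] [∀ i, Nonempty (α i)] [AddCommMonoid M] [Module ℚ≥0 M]
    (i : ι) (g : α i → M) :
    𝔼 x : ∀ i, α i, g (x i) = 𝔼 a, g a :=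
  calc 𝔼 x : ∀ i, α i, g (x i)
      = 𝔼 y : α i × ∀ j : {j // j ≠ i}, α j, g y.1 :=
        Fintype.expect_equiv (Equiv.piSplitAt i α) _ _ fun _ ↦ rfl
    _ = 𝔼 a, 𝔼 _z : ∀ j : {j // j ≠ i}, α j, g a := by
        rw [← univ_product_univ, expect_product]
    _ = 𝔼 a, g a := by simp only [Fintype.expect_const]

lemma expect_pi_prod_s4 {ι K : Type*} {α : ι → Type*} [Fintype ι] [DecidableEq ι]
    [∀ i, Fintype (α i)] [Semifield K] [CharZero K] (g : ∀ i, α i → K) :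
    𝔼 x : ∀ i, α i, ∏ i, g i (x i) = ∏ i, 𝔼 a, g i a := by
  simp only [Fintype.expect_eq_sum_div_card, prod_div_distrib, prod_univ_sum,
    Fintype.piFinset_univ, Fintype.card_pi, Nat.cast_prod]

section UniformProb

variable {α β ι : Type*} [Fintype α]

open Classical in
/-- The probability of the event `p` under the uniform distribution on the finite type `α`, encoded
as the average of the indicator function of `p`. It is `0` when `α` is empty. -/
noncomputable def uniformProb (p : α → Prop) : ℝ :=
  𝔼 a, if p a then 1 else 0

lemma uniformProb_def (p : α → Prop) [DecidablePred p] :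
    uniformProb p = 𝔼 a, if p a then (1 : ℝ) else 0 := by
  unfold uniformProb
  congr!

lemma uniformProb_not [Nonempty α] (p : α → Prop) :
    uniformProb (fun a ↦ ¬ p a) = 1 - uniformProb p := by
  classical
  have indicator_not (a : α) :
      (if ¬ p a then 1 else 0 : ℝ) = 1 - if p a then 1 else 0 := by
    split_ifs <;> simp
  simp only [uniformProb_def, indicator_not, expect_sub_distrib, Fintype.expect_const]

lemma uniformProb_singleton (t : α) : uniformProb (· = t) = 1 / (Fintype.card α : ℝ) := by
  classical
  simp [uniformProb_def]

lemma uniformProb_pi_apply {γ : ι → Type*} [Fintype ι] [DecidableEq ι] [∀ i, Fintype (γ i)]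
    [∀ i, Nonempty (γ i)] (i : ι) (p : γ i → Prop) :
    uniformProb (fun x : ∀ i, γ i ↦ p (x i)) = uniformProb p := by
  classical
  simp only [uniformProb_def]
  exact expect_pi_apply i fun a ↦ if p a then (1 : ℝ) else 0

lemma uniformProb_pi_forall {γ : ι → Type*} [Fintype ι] [DecidableEq ι] [∀ i, Fintype (γ i)]
    (p : ∀ i, γ i → Prop) :
    uniformProb (fun x : ∀ i, γ i ↦ ∀ i, p i (x i)) = ∏ i, uniformProb (p i) := by
  classical
  simp only [uniformProb_def, ← expect_pi_prod_s4, Fintype.prod_boole]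

lemma uniformProb_exists_apply_eq [DecidableEq α] [Fintype β] (t : β) :
    uniformProb (fun c : α → β ↦ ∃ a, c a = t) =
      1 - (1 - 1 / (Fintype.card β : ℝ)) ^ Fintype.card α := by
  have : Nonempty β := ⟨t⟩
  have miss : uniformProb (fun c : α → β ↦ ∀ a, ¬ c a = t) =
      (1 - 1 / (Fintype.card β : ℝ)) ^ Fintype.card α := by
    rw [uniformProb_pi_forall fun _ b ↦ ¬ b = t, uniformProb_not, uniformProb_singleton, prod_const,
      card_univ]
  rw [← miss, ← uniformProb_not]
  simp only [not_forall, not_not]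

lemma expect_card_filter_s4 (s : Finset β) (p : α → β → Prop) [∀ a, DecidablePred (p a)] :
    𝔼 a, (#{b ∈ s | p a b} : ℝ) = ∑ b ∈ s, uniformProb (p · b) := by
  simp only [← sum_boole, expect_sum_comm, uniformProb_def]

end UniformProb

section BloomMatrix

variable {L E ι α β : Type*} [Fintype ι] [DecidableEq ι] [Fintype α] [DecidableEq α] [Fintype β]
  [Nonempty β]

lemma uniformProb_forall_exists_apply_eq {X : Type*} [Fintype X] [DecidableEq X] (x : X)
    (t : ι → β) :
    uniformProb (fun h : X → ι → α → β ↦ ∀ i, ∃ a, h x i a = t i) =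
      (1 - (1 - 1 / (Fintype.card β : ℝ)) ^ Fintype.card α) ^ Fintype.card ι := by
  rw [uniformProb_pi_apply (γ := fun _ : X ↦ ι → α → β) x fun b ↦ ∀ i, ∃ a, b i a = t i,
    uniformProb_pi_forall fun i (c : α → β) ↦ ∃ a, c a = t i]
  simp only [uniformProb_exists_apply_eq, prod_const, card_univ]

/-- `ι` indexes the hash functions, `α` the insertions into each array and `β` the positions of an
array; `w` weights the labels. -/
theorem bloom_matrix_avg_fp_rate_general [Fintype L] [DecidableEq L] [Fintype E] [DecidableEq E]
    [DecidableEq β] (w : L → ℝ) (f : L → Finset E) (j : L → E → ι → β) :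
    𝔼 h : L × E → ι → α → β,
        ∑ l, w l * #{e ∈ univ \ f l | ∀ i, ∃ a, h (l, e) i a = j l e i} =
      ∑ l, w l * (#(univ \ f l) *
        (1 - (1 - 1 / (Fintype.card β : ℝ)) ^ Fintype.card α) ^ Fintype.card ι) := by
  rw [expect_sum_comm]
  refine sum_congr rfl fun l _ ↦ ?_
  rw [← mul_expect,
    expect_card_filter_s4 _ fun (h : L × E → ι → α → β) e ↦ ∀ i, ∃ a, h (l, e) i a = j l e i]
  simp only [uniformProb_forall_exists_apply_eq, sum_const, nsmul_eq_mul]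

end BloomMatrix

/-- The average false positive rate of a Bloom Matrix over a set of labels `L`:
the expected value of `(1/|L|) · Σ_l |{e ∈ E \ f l | ∀ i, j l i ∈ range (h (l,e) i)}|`
equals `(Σ_l |E \ f l| · (1 - (1 - 1/m)^{n·k})^k) / |L|`. -/
theorem bloom_matrix_avg_fp_rate (L E : Type*) [Fintype L] [DecidableEq L] [Nonempty L] [Fintype E]
    [DecidableEq E] (f : L → Finset E) (m k n : ℕ) (hm : 1 ≤ m)
    (j : L → Fin k → Fin m) :
    ∑ h : L × E → Fin k → (Fin (n * k) → Fin m),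
        (1 / (Fintype.card (L × E → Fin k → (Fin (n * k) → Fin m)) : ℝ)) *
          ((1 / (Fintype.card L : ℝ)) * ∑ l : L,
            (((Finset.univ \ f l).filter
                (fun e : E => ∀ i : Fin k, ∃ a, h (l, e) i a = j l i)).card : ℝ)) =
      (∑ l : L, ((Finset.univ \ f l).card : ℝ) * (1 - (1 - 1 / (m : ℝ)) ^ (n * k)) ^ k) /
        (Fintype.card L : ℝ) := by
  have : NeZero m := ⟨by lia⟩
  have average := bloom_matrix_avg_fp_rate_general (α := Fin (n * k))
    (fun _ ↦ 1 / (Fintype.card L : ℝ)) f fun l _ ↦ j l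
  simp only [Fintype.card_fin, one_div_mul_eq_div] at average
  rw [← mul_sum, one_div_mul_eq_div, ← Fintype.expect_eq_sum_div_card]
  simp only [one_div_mul_eq_div, sum_div]
  convert average
end

section
/- Let n be a positive real number and let p be a real number with 0 < p < 1. Define m = -n · (ln p)/(ln 2)^2 and k = -(ln p)/(ln 2). Then m > 0, k > 0, k = (m/n) · ln 2, and (1 - exp(-(k·n)/m))^k = p. -/
/-- The asymptotic false positive probability of a Bloom filter with `m` bits, `k` hash functions
and `n` inserted elements: each of the `k` probed bits is set with probability
`1 - exp (-(k * n) / m)`. All three parameters are real, as `m` and `k` are not rounded. -/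
noncomputable def bloomFalsePositiveProb (m n k : ℝ) : ℝ :=
  (1 - Real.exp (-(k * n) / m)) ^ k

-- This number of hash functions leaves each bit set with probability one half.
theorem bloomFalsePositiveProb_div_mul_log_two {m n : ℝ} (hm : m ≠ 0) (hn : n ≠ 0) :
    bloomFalsePositiveProb m n (m / n * Real.log 2) = 2⁻¹ ^ (m / n * Real.log 2) := by
  have exponent_eq : -(m / n * Real.log 2 * n) / m = -Real.log 2 := by field_simp
  have base_eq : 1 - Real.exp (-Real.log 2) = 2⁻¹ := by
    rw [Real.exp_neg, Real.exp_log two_pos]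
    norm_num
  rw [bloomFalsePositiveProb, exponent_eq, base_eq]

theorem inv_rpow_neg_logb {b x : ℝ} (hb : 0 < b) (hb1 : b ≠ 1) (hx : 0 < x) :
    b⁻¹ ^ (-Real.logb b x) = x := by
  rw [← Real.rpow_neg_eq_inv_rpow, neg_neg, Real.rpow_logb hb hb1 hx]

/-- Choosing `m = -n ln p / ln² 2` and `k = -ln p / ln 2` gives `k = (m/n) ln 2` and
asymptotic false positive probability `(1 - e^{-kn/m})^k = p`. -/
theorem bloom_params_achieve_p (n p : ℝ) (hn : 0 < n) (hp0 : 0 < p) (hp1 : p < 1) :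
    let m : ℝ := -n * Real.log p / (Real.log 2) ^ 2
    let k : ℝ := -(Real.log p) / Real.log 2
    0 < m ∧ 0 < k ∧ k = (m / n) * Real.log 2 ∧
      (1 - Real.exp (-(k * n) / m)) ^ k = p := by
  intro m k
  have log_p_neg : Real.log p < 0 := Real.log_neg hp0 hp1
  have log_two_pos : 0 < Real.log 2 := Real.log_pos one_lt_two
  have m_pos : 0 < m :=
    div_pos (mul_pos_of_neg_of_neg (neg_neg_of_pos hn) log_p_neg) (pow_pos log_two_pos 2)
  have k_pos : 0 < k := div_pos (neg_pos_of_neg log_p_neg) log_two_pos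
  have k_eq : k = m / n * Real.log 2 := by
    simp only [m, k]
    field_simp
  have k_eq_neg_logb : k = -Real.logb 2 p := neg_div _ _
  refine ⟨m_pos, k_pos, k_eq, ?_⟩
  calc
    bloomFalsePositiveProb m n k = 2⁻¹ ^ k := by
      rw [k_eq, bloomFalsePositiveProb_div_mul_log_two m_pos.ne' hn.ne']
    _ = p := by rw [k_eq_neg_logb, inv_rpow_neg_logb two_pos (by norm_num) hp0]
end

section
/- Let L (labels) and E (items) be types, f : L → Finset E, m a natural number, and H : L → Finset (Fin m). Define for each row i : Fin m the set G i = ⋃ over labels l' with i ∈ H l' of (f l' : Set E), and define LOOKUP l = ⋂ over i ∈ H l of G i. Suppose the hash neighborhoods are collision-free, i.e., for all labels l₁ ≠ l₂ the sets H l₁ and H l₂ are disjoint. Then for every label l with H l nonempty, LOOKUP l = (f l : Set E); i.e., with collision-free hashing the Bloom Matrix lookup has no false positives. -/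
section

variable {L E R : Type*} {f : L → Set E} {H : L → Set R} {l : L} {i : R}

/-- The Bloom Matrix storing the items `f l` of every label `l` in all rows of its hash
neighborhood `H l`; row `i` is encoded as the set of items whose bit is set in it. -/
def bloomMatrix (f : L → Set E) (H : L → Set R) (i : R) : Set E :=
  ⋃ (l : L) (_ : i ∈ H l), f l

/-- The answer of the Bloom Matrix to a query for the label `l`: the items whose bits are set in
all rows of `H l`. An empty neighborhood `H l` returns every item. -/
def bloomLookup (f : L → Set E) (H : L → Set R) (l : L) : Set E :=
  ⋂ i ∈ H l, bloomMatrix f H i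

theorem subset_bloomMatrix (hi : i ∈ H l) : f l ⊆ bloomMatrix f H i :=
  Set.subset_iUnion₂ (s := fun l (_ : i ∈ H l) => f l) l hi

theorem bloomMatrix_subset_iff {s : Set E} :
    bloomMatrix f H i ⊆ s ↔ ∀ l, i ∈ H l → f l ⊆ s :=
  Set.iUnion₂_subset_iff

theorem subset_bloomLookup : f l ⊆ bloomLookup f H l :=
  Set.subset_iInter₂ fun _ hi => subset_bloomMatrix hi

theorem bloomLookup_subset_bloomMatrix (hi : i ∈ H l) :
    bloomLookup f H l ⊆ bloomMatrix f H i :=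
  Set.biInter_subset_of_mem hi

/-- A lookup intersects rows, so one row free of foreign items removes every false positive,
whatever collisions occur in the other rows. -/
theorem bloom_matrix_collision_free_general (hi : i ∈ H l)
    (hrow : ∀ l', i ∈ H l' → f l' ⊆ f l) : bloomLookup f H l = f l :=
  ((bloomLookup_subset_bloomMatrix hi).trans (bloomMatrix_subset_iff.2 hrow)).antisymm
    subset_bloomLookup

end

/-- With collision-free hash neighborhoods, Bloom Matrix lookup has no false positives:
`LOOKUP l = f l` for every label `l` with nonempty hash neighborhood. -/
theorem bloom_matrix_collision_free (L E : Type*) (f : L → Finset E) (m : ℕ)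
    (H : L → Finset (Fin m))
    (hdisj : ∀ l₁ l₂ : L, l₁ ≠ l₂ → Disjoint (H l₁) (H l₂)) :
    let G : Fin m → Set E := fun i => ⋃ (l' : L) (_ : i ∈ H l'), (f l' : Set E)
    let LOOKUP : L → Set E := fun l => ⋂ i ∈ (H l : Set (Fin m)), G i
    ∀ l : L, (H l).Nonempty → LOOKUP l = (f l : Set E) := by
  rintro G LOOKUP l ⟨i, hi⟩
  have eq_of_mem (l' : L) (hi' : i ∈ H l') : l' = l :=
    not_imp_comm.1 (hdisj l' l) (Finset.not_disjoint_iff.2 ⟨i, hi', hi⟩)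
  exact bloom_matrix_collision_free_general (f := fun l => (f l : Set E))
    (H := fun l => (H l : Set (Fin m))) hi fun l' hi' => by rw [eq_of_mem l' hi']
end

section
/- Let L (labels) and E (items) be types, f : L → Finset E, let m : E → ℕ, and let H : (e : E) → L → Finset (Fin (m e)). Define the filter of item e as B e = ⋃ over labels l' with e ∈ f l' of (H e l' : Set (Fin (m e))), and define LOOKUP l = {e : E | (H e l : Set (Fin (m e))) ⊆ B e}. Suppose that for every item e the hash neighborhood H e l is nonempty for every label l, and the neighborhoods are collision-free within each filter, i.e., for all labels l₁ ≠ l₂ the sets H e l₁ and H e l₂ are disjoint. Then for every label l, LOOKUP l = (f l : Set E); i.e., with collision-free hashing the Bloom Vector lookup has no false positives. -/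
namespace BloomVector

variable {L E : Type*} {V : E → Type*}

/-- The Bloom filter of the item `e`, as its set of raised bits. The dependent type `V e` of bit
positions is arbitrary, so that different items may have filters of different sizes. -/
def filter (f : L → Set E) (H : (e : E) → L → Set (V e)) (e : E) : Set (V e) :=
  ⋃ (l : L) (_ : e ∈ f l), H e l

/-- The answer of the Bloom Vector to the query `l`: the items whose filter has every bit of the
hash neighborhood of `l` raised. -/
def lookup (f : L → Set E) (H : (e : E) → L → Set (V e)) (l : L) : Set E :=
  {e | H e l ⊆ filter f H e}

variable {f : L → Set E} {H : (e : E) → L → Set (V e)} {e : E} {l : L}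

theorem disjoint_filter_right {s : Set (V e)} :
    Disjoint s (filter f H e) ↔ ∀ l, e ∈ f l → Disjoint s (H e l) :=
  Set.disjoint_iUnion₂_right

theorem subset_lookup (f : L → Set E) (H : (e : E) → L → Set (V e)) (l : L) :
    f l ⊆ lookup f H l :=
  fun e he ↦ Set.subset_iUnion₂ (s := fun l (_ : e ∈ f l) ↦ H e l) l he

theorem notMem_lookup_of_disjoint_filter (hne : (H e l).Nonempty)
    (hdisj : Disjoint (H e l) (filter f H e)) : e ∉ lookup f H l :=
  fun he ↦ hne.ne_empty (hdisj.eq_bot_of_le he)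

end BloomVector

open BloomVector in
theorem bloom_vector_collision_free_general {L E : Type*} {V : E → Type*} {f : L → Set E}
    {H : (e : E) → L → Set (V e)} {l : L} (hne : ∀ e ∉ f l, (H e l).Nonempty)
    (hdisj : ∀ e ∉ f l, ∀ l', e ∈ f l' → Disjoint (H e l) (H e l')) :
    lookup f H l = f l := by
  refine Set.Subset.antisymm (fun e he ↦ ?_) (subset_lookup f H l)
  by_contra hel
  exact notMem_lookup_of_disjoint_filter (hne e hel) (disjoint_filter_right.2 (hdisj e hel)) he

/-- With nonempty, collision-free hash neighborhoods in each per-item filter, Bloom Vector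
lookup has no false positives: `LOOKUP l = f l` for every label `l`. -/
theorem bloom_vector_collision_free (L E : Type*) (f : L → Finset E) (m : E → ℕ)
    (H : (e : E) → L → Finset (Fin (m e)))
    (hne : ∀ (e : E) (l : L), (H e l).Nonempty)
    (hdisj : ∀ (e : E) (l₁ l₂ : L), l₁ ≠ l₂ → Disjoint (H e l₁) (H e l₂)) :
    let B : (e : E) → Set (Fin (m e)) := fun e =>
      ⋃ (l' : L) (_ : e ∈ f l'), (H e l' : Set (Fin (m e)))
    let LOOKUP : L → Set E := fun l => {e : E | (H e l : Set (Fin (m e))) ⊆ B e}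
    ∀ l : L, LOOKUP l = (f l : Set E) := by
  intro _ _ l
  exact bloom_vector_collision_free_general (f := fun l ↦ (f l : Set E))
    (H := fun e l ↦ (H e l : Set (Fin (m e)))) (fun e _ ↦ hne e l) fun e he l' he' ↦
      Finset.disjoint_coe.2 (hdisj e l l' fun h ↦ he (h ▸ he'))
end
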